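/- For every positive root γ ∈ R^+, the length of the reflection s_γ satisfies ℓ(s_γ) ≤ ⟨2ρ, γ^∨⟩ − 1. -/

import Mathlib

/-!
The proof is by induction along simple reflections.  Let `γ` be a positive root.  Since
`2 = ⟨γ, γ^∨⟩ = ∑ γ_i ⟨α_i, γ^∨⟩` with all `γ_i ≥ 0`, some simple root satisfies
`⟨α_i, γ^∨⟩ ≥ 1`.

* If `γ = α_i`, then `ℓ(s_γ) ≤ 1`, and `⟨2ρ, α_i^∨⟩ = 2` because `s_i` permutes the positive
  roots other than `α_i` (`simple_refl_pos`) and changes the sign of their pairing with `α_i^∨`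
  (`pairTwoRho_simple`).
* Otherwise `γ' = s_i γ` is again a positive root, `s_γ = s_i s_{γ'} s_i` gives
  `ℓ(s_γ) ≤ ℓ(s_{γ'}) + 2`, and `γ'^∨ = γ^∨ - ⟨α_i, γ^∨⟩ α_i^∨` gives
  `⟨2ρ, γ'^∨⟩ = ⟨2ρ, γ^∨⟩ - 2 ⟨α_i, γ^∨⟩ ≤ ⟨2ρ, γ^∨⟩ - 2`.

The second case strictly decreases `⟨2ρ, γ^∨⟩`, and there are finitely many roots, so the
induction terminates; it is phrased as a counterexample with minimal `⟨2ρ, γ^∨⟩`.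
-/

open scoped BigOperators

/-- A reduced crystallographic root system with a fixed base `α_1, …, α_n` of simple
roots, bundled with its Weyl group `W`.  A root `γ` is recorded by its integer
coordinate vector in the basis of simple roots (so the `i`-th simple root is
`Pi.single i 1`), and `cor γ` is the coordinate vector of the coroot `γ^∨` in the
basis of simple coroots (hence `cor γ i = ⟨χ_i, γ^∨⟩` for the fundamental weights
`χ_i`).  `A i j = ⟨α_i, α_j^∨⟩` is the Cartan matrix, `σ γ` is the reflection `s_γ`
and `act` is the action of the Weyl group on the root lattice. -/
structure RootSystemData (n : ℕ) where
  A : Fin n → Fin n → ℤ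
  R : Finset (Fin n → ℤ)
  cor : (Fin n → ℤ) → (Fin n → ℤ)
  W : Type
  [grp : Group W]
  σ : (Fin n → ℤ) → W
  act : W → (Fin n → ℤ) → (Fin n → ℤ)
  simple_mem : ∀ i : Fin n, (Pi.single i 1 : Fin n → ℤ) ∈ R
  root_ne_zero : ∀ γ ∈ R, γ ≠ 0
  neg_mem : ∀ γ ∈ R, -γ ∈ R
  pos_or_neg : ∀ γ ∈ R, (∀ i, 0 ≤ γ i) ∨ (∀ i, γ i ≤ 0)
  reduced : ∀ γ ∈ R, ∀ k : ℤ, k • γ ∈ R → k = 1 ∨ k = -1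
  cor_simple : ∀ i : Fin n, cor (Pi.single i 1) = Pi.single i 1
  cor_neg : ∀ γ ∈ R, cor (-γ) = -(cor γ)
  pair_self : ∀ γ ∈ R, (∑ i, ∑ j, γ i * A i j * cor γ j) = 2
  act_one : ∀ x, act 1 x = x
  act_mul : ∀ w w' x, act (w * w') x = act w (act w' x)
  act_refl : ∀ γ ∈ R, ∀ x, act (σ γ) x = x - (∑ i, ∑ j, x i * A i j * cor γ j) • γ
  act_mem : ∀ (w : W), ∀ γ ∈ R, act w γ ∈ R
  cor_refl : ∀ γ ∈ R, ∀ β ∈ R,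
    cor (act (σ γ) β) = cor β - (∑ i, ∑ j, γ i * A i j * cor β j) • cor γ
  refl_sq : ∀ γ ∈ R, σ γ * σ γ = 1
  refl_act : ∀ (w : W), ∀ γ ∈ R, σ (act w γ) = w * σ γ * w⁻¹
  act_faithful : ∀ w w' : W, (∀ γ ∈ R, act w γ = act w' γ) → w = w'
  generated : ∀ w : W, ∃ l : List (Fin n), w = (l.map fun i => σ (Pi.single i 1)).prod

namespace RootSystemData

instance {n : ℕ} (c : RootSystemData n) : Group c.W := c.grp

/-- the pairing `⟨x, λ⟩` between an element `x` of the root lattice (coordinates in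
the basis of simple roots) and an element `λ` of the coroot lattice (coordinates in
the basis of simple coroots) -/
def pair {n : ℕ} (c : RootSystemData n) (x lam : Fin n → ℤ) : ℤ :=
  ∑ i, ∑ j, x i * c.A i j * lam j

/-- the `i`-th simple root -/
def sroot {n : ℕ} (_c : RootSystemData n) (i : Fin n) : Fin n → ℤ := Pi.single i 1

/-- the simple reflection `s_i` -/
def s {n : ℕ} (c : RootSystemData n) (i : Fin n) : c.W := c.σ (c.sroot i)

/-- `s_{α_{t+1}}` for a `0`-based natural number index `t` (`= 1` when out of range) -/
def sN {n : ℕ} (c : RootSystemData n) (t : ℕ) : c.W := if h : t < n then c.s ⟨t, h⟩ else 1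

/-- `⟨2ρ, λ⟩ = Σ_{β ∈ R^+} ⟨β, λ⟩`, where `ρ` is the half-sum of the positive roots -/
def pairTwoRho {n : ℕ} (c : RootSystemData n) (lam : Fin n → ℤ) : ℤ :=
  ∑ β ∈ c.R, if ∀ i, 0 ≤ β i then c.pair β lam else 0

/-- the length of `w ∈ W` with respect to the simple reflections -/
noncomputable def len {n : ℕ} (c : RootSystemData n) (w : c.W) : ℕ :=
  sInf {k | ∃ l : List (Fin n), l.length = k ∧ (l.map c.s).prod = w}

/-- the parabolic subgroup `W_S` generated by the simple reflections indexed by `S` -/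
def Wsub {n : ℕ} (c : RootSystemData n) (S : Finset (Fin n)) : Subgroup c.W :=
  Subgroup.closure (c.s '' ↑S)

/-- `w ∈ W_T^S`: `w ∈ W_T` and `w` has minimal length in the coset `w W_S` -/
def MinRep {n : ℕ} (c : RootSystemData n) (T S : Finset (Fin n)) (w : c.W) : Prop :=
  w ∈ c.Wsub T ∧ ∀ u ∈ c.Wsub S, c.len w ≤ c.len (w * u)

/-- `w` is the longest element of `W_S` -/
def IsLongest {n : ℕ} (c : RootSystemData n) (S : Finset (Fin n)) (w : c.W) : Prop :=
  w ∈ c.Wsub S ∧ ∀ v ∈ c.Wsub S, c.len v ≤ c.len w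

end RootSystemData

/-- the support of `γ` is contained in `S`, i.e. `γ` lies in the span of
`{α_i : i ∈ S}` (for a root `γ`, membership in `R_S`) -/
def suppIn {n : ℕ} (S : Finset (Fin n)) (γ : Fin n → ℤ) : Prop :=
  ∀ i, i ∉ S → γ i = 0

/-- `Δ_j` for `0 ≤ j ≤ r+1`: the index set of the first `j` simple roots for `j ≤ r`,
and all of `Δ` for `j = r+1`.  (Indices of simple roots are `0`-based, so
`α_1, …, α_j` correspond to the indices `0, …, j-1`.) -/
def deltaSet (n r j : ℕ) : Finset (Fin n) :=
  if j = r + 1 then Finset.univ else Finset.univ.filter fun i => (i : ℕ) < j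

namespace RootSystemData

/-- `v 0, …, v r` (standing for `v_1, …, v_{r+1}`) is the decomposition of `w`
associated to `(Δ_P, Υ)`:  each `v_i ∈ W_{Δ_i}^{Δ_{i-1}}` and `w = v_{r+1} v_r ⋯ v_1`. -/
def IsDecomp {n : ℕ} (c : RootSystemData n) (r : ℕ) (w : c.W)
    (v : Fin (r + 1) → c.W) : Prop :=
  (∀ k : Fin (r + 1), c.MinRep (deltaSet n r ((k : ℕ) + 1)) (deltaSet n r (k : ℕ)) (v k)) ∧
    w = (List.ofFn v).reverse.prod

/-- the first `m` simple roots `α_1, …, α_m` form a path of type `A_m`: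
`⟨α_i, α_j^∨⟩ = -1` if `|i-j| = 1` and `⟨α_i, α_j^∨⟩ = 0` if `|i-j| ≥ 2`. -/
def PathA {n : ℕ} (c : RootSystemData n) (m : ℕ) : Prop :=
  ∀ i j : Fin n, (i : ℕ) < m → (j : ℕ) < m →
    (((i : ℕ) + 1 = (j : ℕ) ∨ (j : ℕ) + 1 = (i : ℕ)) → c.A i j = -1) ∧
    ((i : ℕ) + 2 ≤ (j : ℕ) ∨ (j : ℕ) + 2 ≤ (i : ℕ) → c.A i j = 0)

/-- `u_{[k,m]} = s_k s_{k+1} ⋯ s_m` (`1`-based indices; `u_{[k,m]} = 1` for `k > m`) -/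
def uu {n : ℕ} (c : RootSystemData n) (k m : ℕ) : c.W :=
  ((List.range' k (m + 1 - k)).map fun t => c.sN (t - 1)).prod

/-- `u_i^{(m)} = s_{m-i+1} s_{m-i+2} ⋯ s_m` -/
def uElt {n : ℕ} (c : RootSystemData n) (i m : ℕ) : c.W := c.uu (m - i + 1) m

end RootSystemData

/-- strict lexicographic order on `Fin m → ℤ` -/
def lexLT {m : ℕ} (x y : Fin m → ℤ) : Prop :=
  ∃ j, x j < y j ∧ ∀ k, k < j → x k = y k

/-- lexicographic order on `Fin m → ℤ` -/
def lexLE {m : ℕ} (x y : Fin m → ℤ) : Prop := x = y ∨ lexLT x y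

/-- the grading `gr(q_{α_{j+1}^∨}) ∈ ℤ^{r+1}` (for the `0`-based index `j < r`), when
`Δ_P` is of type `A_r`: in `1`-based terms, `gr(q_{α_1^∨}) = 2·e_1` and
`gr(q_{α_j^∨}) = (1-j)·e_{j-1} + (1+j)·e_j` for `2 ≤ j ≤ r`. -/
def grQ (r j : ℕ) : Fin (r + 1) → ℤ := fun k =>
  (if (k : ℕ) = j then (j : ℤ) + 2 else 0) + (if (k : ℕ) + 1 = j then -(j : ℤ) else 0)

/-- the grading `gr(q_λ)` for `λ ∈ Q_P^∨` (coordinates in simple coroots), extended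
additively from the `gr(q_{α_j^∨})`, when `Δ_P` is of type `A_r` -/
def grQlam (n r : ℕ) (lam : Fin n → ℤ) : Fin (r + 1) → ℤ :=
  fun k => ∑ j, lam j * grQ r (j : ℕ) k

namespace RootSystemData

variable {n : ℕ} (c : RootSystemData n)

lemma pair_sub_left (x y l : Fin n → ℤ) : c.pair (x - y) l = c.pair x l - c.pair y l := by
  simp [pair, sub_mul, Finset.sum_sub_distrib]

lemma pair_smul_left (k : ℤ) (x l : Fin n → ℤ) : c.pair (k • x) l = k * c.pair x l := by
  simp [pair, Finset.mul_sum, mul_assoc]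

lemma pair_sub_smul_right (x l m : Fin n → ℤ) (k : ℤ) :
    c.pair x (l - k • m) = c.pair x l - k * c.pair x m := by
  simp only [pair, Finset.mul_sum, ← Finset.sum_sub_distrib]
  refine Finset.sum_congr rfl fun i _ => Finset.sum_congr rfl fun j _ => ?_
  simp only [Pi.sub_apply, Pi.smul_apply, smul_eq_mul]
  ring

lemma pairTwoRho_sub_smul (l m : Fin n → ℤ) (k : ℤ) :
    c.pairTwoRho (l - k • m) = c.pairTwoRho l - k * c.pairTwoRho m := by
  simp only [pairTwoRho, Finset.mul_sum, ← Finset.sum_sub_distrib]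
  refine Finset.sum_congr rfl fun β _ => ?_
  split_ifs
  · exact c.pair_sub_smul_right _ _ _ _
  · simp

lemma pair_eq_sum_sroot (x l : Fin n → ℤ) : c.pair x l = ∑ i, x i * c.pair (c.sroot i) l := by
  refine Finset.sum_congr rfl fun i _ => ?_
  have : c.pair (c.sroot i) l = ∑ j, c.A i j * l j := by
    unfold pair
    rw [Finset.sum_eq_single i]
    · simp [sroot]
    · intro b _ hb
      simp [sroot, hb]
    · simp
  rw [this, Finset.mul_sum]
  simp [mul_assoc]

lemma sroot_mem (i : Fin n) : c.sroot i ∈ c.R := c.simple_mem i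

lemma cor_sroot (i : Fin n) : c.cor (c.sroot i) = c.sroot i := c.cor_simple i

lemma act_s (i : Fin n) (x : Fin n → ℤ) :
    c.act (c.s i) x = x - c.pair x (c.sroot i) • c.sroot i := by
  have := c.act_refl _ (c.sroot_mem i) x
  rwa [cor_sroot] at this

lemma s_mul_s (i : Fin n) : c.s i * c.s i = 1 := c.refl_sq _ (c.sroot_mem i)

lemma act_s_act_s (i : Fin n) (x : Fin n → ℤ) : c.act (c.s i) (c.act (c.s i) x) = x := by
  rw [← c.act_mul]
  exact (congrArg (fun w => c.act w x) (c.s_mul_s i)).trans (c.act_one x)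

/-- A simple reflection `s_i` maps every positive root other than `α_i` to a positive root:
such a root has a positive coordinate away from `i`, which `s_i` does not change. -/
lemma simple_refl_pos (i : Fin n) {β : Fin n → ℤ} (hβ : β ∈ c.R) (hpos : ∀ j, 0 ≤ β j)
    (hne : β ≠ c.sroot i) :
    c.act (c.s i) β ∈ c.R ∧ (∀ j, 0 ≤ c.act (c.s i) β j) ∧ c.act (c.s i) β ≠ c.sroot i := by
  have hex : ∃ j, j ≠ i ∧ 0 < β j := by
    by_contra! h
    have hb : β = β i • c.sroot i := by
      funext j
      by_cases hj : j = i
      · subst hj; simp [sroot]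
      · have := h j hj
        have := hpos j
        simp [sroot, hj]
        omega
    rcases c.reduced _ (c.sroot_mem i) (β i) (hb ▸ hβ) with h1 | h1
    · rw [h1, one_smul] at hb
      exact hne hb
    · have := hpos i
      omega
  obtain ⟨j, hji, hj⟩ := hex
  have hmem := c.act_mem (c.s i) β hβ
  have hcoord : c.act (c.s i) β j = β j := by
    rw [act_s]; simp [sroot, hji]
  refine ⟨hmem, ?_, ?_⟩
  · rcases c.pos_or_neg _ hmem with h | h
    · exact h
    · have := h j
      omega
  · intro h
    rw [h] at hcoord
    simp [sroot, hji] at hcoord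
    omega

lemma pair_sroot_self (i : Fin n) : c.pair (c.sroot i) (c.sroot i) = 2 := by
  have := c.pair_self _ (c.sroot_mem i)
  rwa [cor_sroot] at this

/-- `⟨2ρ, α_i^∨⟩ = 2`. -/
lemma pairTwoRho_simple (i : Fin n) : c.pairTwoRho (c.sroot i) = 2 := by
  classical
  unfold pairTwoRho
  rw [← Finset.sum_filter, ← Finset.sum_erase_add (a := c.sroot i), pair_sroot_self]
  · rw [add_eq_right]
    -- The involution `s_i` pairs off the remaining positive roots with opposite contributions.
    refine Finset.sum_involution (fun β _ => c.act (c.s i) β) ?_ ?_ ?_ ?_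
    · intro β _
      simp only [act_s, pair_sub_left, pair_smul_left, pair_sroot_self]
      ring
    · intro β _ h0 heq
      have h1 := congrFun heq i
      simp [act_s, sroot] at h1
      exact h0 h1
    · intro β hβ
      simp only [Finset.mem_erase, Finset.mem_filter] at hβ ⊢
      obtain ⟨h1, h2, h3⟩ := c.simple_refl_pos i hβ.2.1 hβ.2.2 hβ.1
      exact ⟨h3, h1, h2⟩
    · intro β _
      exact c.act_s_act_s i β
  · simp only [Finset.mem_filter]
    refine ⟨c.sroot_mem i, fun j => ?_⟩
    by_cases hj : j = i
    · subst hj; simp [sroot]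
    · simp [sroot, hj]

lemma len_le_length (l : List (Fin n)) : c.len (l.map c.s).prod ≤ l.length :=
  Nat.sInf_le ⟨l, rfl, rfl⟩

lemma exists_reduced_word (w : c.W) :
    ∃ l : List (Fin n), l.length = c.len w ∧ (l.map c.s).prod = w := by
  obtain ⟨l, hl⟩ := c.generated w
  exact Nat.sInf_mem (s := {k | ∃ l : List (Fin n), l.length = k ∧ (l.map c.s).prod = w})
    ⟨l.length, l, rfl, hl.symm⟩

lemma len_conj_le (i : Fin n) (w : c.W) : c.len (c.s i * w * c.s i) ≤ c.len w + 2 := by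
  obtain ⟨l, hl, hw⟩ := c.exists_reduced_word w
  have h := c.len_le_length (i :: (l ++ [i]))
  simp only [List.map_cons, List.map_append, List.prod_cons, List.prod_append, List.map_nil,
    List.prod_nil, mul_one, hw, List.length_cons, List.length_append, List.length_nil, hl] at h
  rw [← mul_assoc] at h
  omega

lemma len_s_le (i : Fin n) : c.len (c.s i) ≤ 1 := by
  simpa using c.len_le_length [i]

end RootSystemData

/-- For every positive root `γ`, `ℓ(s_γ) ≤ ⟨2ρ, γ^∨⟩ - 1`. -/
theorem reflection_length_le {n : ℕ} (c : RootSystemData n)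
    (γ : Fin n → ℤ) (hγR : γ ∈ c.R) (hγpos : ∀ i, 0 ≤ γ i) :
    (c.len (c.σ γ) : ℤ) ≤ c.pairTwoRho (c.cor γ) - 1 := by
  classical
  by_contra hbad
  obtain ⟨β, hβ, hmin⟩ := Finset.exists_min_image
    (c.R.filter fun β => (∀ i, 0 ≤ β i) ∧
      ¬ (c.len (c.σ β) : ℤ) ≤ c.pairTwoRho (c.cor β) - 1)
    (fun β => c.pairTwoRho (c.cor β)) ⟨γ, Finset.mem_filter.2 ⟨hγR, hγpos, hbad⟩⟩
  obtain ⟨hβR, hβpos, hβbad⟩ := Finset.mem_filter.1 hβ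
  obtain ⟨i, hi⟩ : ∃ i, 0 < c.pair (c.sroot i) (c.cor β) := by
    by_contra! h
    have h2 : c.pair β (c.cor β) = 2 := c.pair_self β hβR
    rw [c.pair_eq_sum_sroot] at h2
    have := Finset.sum_nonpos fun j (_ : j ∈ Finset.univ) =>
      mul_nonpos_of_nonneg_of_nonpos (hβpos j) (h j)
    omega
  by_cases hne : β = c.sroot i
  · subst hne
    apply hβbad
    rw [c.cor_sroot, c.pairTwoRho_simple]
    have : c.len (c.σ (c.sroot i)) ≤ 1 := c.len_s_le i
    omega
  · obtain ⟨hR', hpos', -⟩ := c.simple_refl_pos i hβR hβpos hne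
    have hcor : c.cor (c.act (c.s i) β) =
        c.cor β - c.pair (c.sroot i) (c.cor β) • c.sroot i := by
      have := c.cor_refl _ (c.sroot_mem i) β hβR
      rwa [c.cor_sroot] at this
    have hrho : c.pairTwoRho (c.cor (c.act (c.s i) β)) =
        c.pairTwoRho (c.cor β) - c.pair (c.sroot i) (c.cor β) * 2 := by
      rw [hcor, c.pairTwoRho_sub_smul, c.pairTwoRho_simple]
    have hσ : c.σ β = c.s i * c.σ (c.act (c.s i) β) * c.s i := by
      have h := c.refl_act (c.s i) _ hR'
      rw [c.act_s_act_s] at h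
      have hinv : (c.s i)⁻¹ = c.s i := inv_eq_of_mul_eq_one_left (c.s_mul_s i)
      exact h.trans (congrArg (fun w => c.s i * c.σ (c.act (c.s i) β) * w) hinv)
    have hlen := c.len_conj_le i (c.σ (c.act (c.s i) β))
    rw [← hσ] at hlen
    have hm : c.act (c.s i) β ∈ c.R.filter fun β => (∀ i, 0 ≤ β i) ∧
        ¬ (c.len (c.σ β) : ℤ) ≤ c.pairTwoRho (c.cor β) - 1 := by
      refine Finset.mem_filter.2 ⟨hR', hpos', ?_⟩
      omega
    have := hmin _ hm
    omega
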